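/- Let n ≥ 1 be an integer, γ ∈ (0, n/2), μ = n²/4 − γ², and let f : ℝⁿ → ℝ be bounded and continuous. Then the convolution u(x,y) = ∫_{ℝⁿ} y^{n/2+γ}(|x−ξ|² + y²)^{−(n/2+γ)} f(ξ) dξ is well defined and smooth on ℝⁿ × (0,∞) and satisfies the hyperbolic eigenvalue equation y²(Δ_x u(x,y) + ∂²_y u(x,y)) − (n−1) y ∂_y u(x,y) + μ u(x,y) = 0 on ℝⁿ × (0,∞). -/

import Mathlib

open Real Topology MeasureTheory

noncomputable def lapX {n : ℕ} (u : EuclideanSpace ℝ (Fin n) → ℝ → ℝ)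
    (x : EuclideanSpace ℝ (Fin n)) (y : ℝ) : ℝ :=
  ∑ i : Fin n, iteratedDeriv 2 (fun t : ℝ => u (x + t • EuclideanSpace.single i (1:ℝ)) y) 0

noncomputable def hypLap (n : ℕ) (u : EuclideanSpace ℝ (Fin n) → ℝ → ℝ)
    (x : EuclideanSpace ℝ (Fin n)) (y : ℝ) : ℝ :=
  y ^ 2 * (lapX u x y + iteratedDeriv 2 (u x) y) - ((n : ℝ) - 1) * y * deriv (u x) y

/-- The Poisson extension `u(x,y) = ∫ y^{n/2+γ}(|x-ξ|²+y²)^{-(n/2+γ)} f(ξ) dξ`. -/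
noncomputable def poissonExt (n : ℕ) (γ : ℝ) (f : EuclideanSpace ℝ (Fin n) → ℝ)
    (x : EuclideanSpace ℝ (Fin n)) (y : ℝ) : ℝ :=
  ∫ ξ : EuclideanSpace ℝ (Fin n),
    y ^ ((n : ℝ)/2 + γ) * (‖x - ξ‖ ^ 2 + y ^ 2) ^ (-((n : ℝ)/2 + γ)) * f ξ

/-!
Put `s = n/2 + γ`. Up to the factor `y ^ s`, the Poisson integral is a potential in `ℝⁿ × ℝ`: the
kernel `‖z‖ ^ (-2s)` integrated against `f` on the hyperplane `y = 0`. The kernel is homogeneous and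
smooth away from the origin, so its derivatives decay ever faster and one weighted integrability
condition on `f` justifies differentiating under the integral to all orders.

Both `Δ ‖z‖ ^ (-2s) = 2s(2s + 1 - n) ‖z‖ ^ (-2s - 2)` and `∂_y ‖z‖ ^ (-2s) = -2s y ‖z‖ ^ (-2s - 2)`
involve the same kernel, and `y` does not change when a boundary point is subtracted from `z`.
Conjugation by `y ^ s` turns the hyperbolic Laplacian into `y² Δ + (2s - n + 1) y ∂_y + s(s - n)`,
whose first two terms therefore cancel on the potential, while `s(s - n) = -μ`.
-/

open InnerProductSpace Set
open scoped ContDiff Laplacian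

/-- `G` is smooth away from the origin and positively homogeneous of degree `d`; its value at the
origin, where the kernels of interest are singular, is left unconstrained. -/
structure IsSmoothHomogeneous {H F : Type*} [NormedAddCommGroup H] [NormedSpace ℝ H]
    [NormedAddCommGroup F] [NormedSpace ℝ F] (d : ℝ) (G : H → F) : Prop where
  contDiffOn : ContDiffOn ℝ ∞ G {0}ᶜ
  apply_smul : ∀ ⦃c : ℝ⦄, 0 < c → ∀ ⦃z : H⦄, z ≠ 0 → G (c • z) = c ^ d • G z

/-- The potential with kernel `G` of the density `f ν`, placed on the subspace `range ι` of `H`. -/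
noncomputable def potential {E H F : Type*} [MeasurableSpace E]
    [NormedAddCommGroup E] [NormedSpace ℝ E] [NormedAddCommGroup H] [NormedSpace ℝ H]
    [NormedAddCommGroup F] [NormedSpace ℝ F] (ν : Measure E) (ι : E →L[ℝ] H) (f : E → ℝ)
    (G : H → F) (p : H) : F :=
  ∫ ξ, f ξ • G (p - ι ξ) ∂ν

theorem continuous_one_add_norm_rpow {E : Type*} [SeminormedAddCommGroup E] (d : ℝ) :
    Continuous fun ξ : E => (1 + ‖ξ‖) ^ d :=
  (continuous_const.add continuous_norm).rpow_const fun ξ =>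
    Or.inl (add_pos_of_pos_of_nonneg one_pos (norm_nonneg ξ)).ne'

theorem one_add_norm_rpow_sub_mul {E : Type*} [SeminormedAddCommGroup E] (d d' : ℝ) (ξ : E)
    (a : ℝ) : (1 + ‖ξ‖) ^ (d' - d) * ((1 + ‖ξ‖) ^ d * a) = (1 + ‖ξ‖) ^ d' * a := by
  rw [← mul_assoc, ← Real.rpow_add (by positivity), sub_add_cancel]

theorem integrable_one_add_norm_rpow_mul_of_bounded {E : Type*} [NormedAddCommGroup E]
    [NormedSpace ℝ E] [FiniteDimensional ℝ E] [MeasurableSpace E] [BorelSpace E] {ν : Measure E}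
    [ν.IsAddHaarMeasure] {f : E → ℝ} (hf : AEStronglyMeasurable f ν) {C : ℝ} (hC : ∀ ξ, |f ξ| ≤ C)
    {r : ℝ} (hr : Module.finrank ℝ E < r) : Integrable (fun ξ => (1 + ‖ξ‖) ^ (-r) * f ξ) ν :=
  (integrable_one_add_norm hr).mul_bdd hf (ae_of_all ν hC)

section Weight

variable {E : Type*} [NormedAddCommGroup E] [MeasurableSpace E] [OpensMeasurableSpace E]
  {ν : Measure E} {f : E → ℝ} {d d' : ℝ}

theorem integrable_one_add_norm_rpow_mul_of_le
    (hf : Integrable (fun ξ => (1 + ‖ξ‖) ^ d * f ξ) ν) (hd : d' ≤ d) :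
    Integrable (fun ξ => (1 + ‖ξ‖) ^ d' * f ξ) ν := by
  have hle : ∀ ξ : E, ‖(1 + ‖ξ‖) ^ (d' - d)‖ ≤ 1 := fun ξ => by
    rw [Real.norm_of_nonneg (by positivity)]
    exact Real.rpow_le_one_of_one_le_of_nonpos (by simp) (by linarith)
  simpa only [one_add_norm_rpow_sub_mul] using
    hf.bdd_mul (continuous_one_add_norm_rpow (d' - d)).aestronglyMeasurable (ae_of_all ν hle)

theorem aestronglyMeasurable_of_integrable_one_add_norm_rpow_mul
    (hf : Integrable (fun ξ => (1 + ‖ξ‖) ^ d * f ξ) ν) : AEStronglyMeasurable f ν := by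
  refine ((continuous_one_add_norm_rpow (0 - d)).aestronglyMeasurable.mul
    hf.aestronglyMeasurable).congr (ae_of_all ν fun ξ => ?_)
  rw [Pi.mul_apply, one_add_norm_rpow_sub_mul, Real.rpow_zero, one_mul]

end Weight

theorem sub_apply_ne_zero_of_notMem_range {E H : Type*} [AddCommGroup E] [Module ℝ E]
    [TopologicalSpace E] [AddCommGroup H] [Module ℝ H] [TopologicalSpace H] {ι : E →L[ℝ] H} {p : H}
    (hp : p ∉ range ι) (ξ : E) : p - ι ξ ≠ 0 :=
  fun h => hp ⟨ξ, (sub_eq_zero.1 h).symm⟩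

theorem isOpen_compl_range_of_finiteDimensional {E H : Type*} [AddCommGroup E] [Module ℝ E]
    [TopologicalSpace E] [NormedAddCommGroup H] [NormedSpace ℝ H] [FiniteDimensional ℝ H]
    (ι : E →L[ℝ] H) : IsOpen (range ι)ᶜ :=
  (LinearMap.range (ι : E →ₗ[ℝ] H)).closed_of_finiteDimensional.isOpen_compl

namespace IsSmoothHomogeneous

section Kernel

variable {H F : Type*} [NormedAddCommGroup H] [NormedSpace ℝ H] [NormedAddCommGroup F]
  [NormedSpace ℝ F] {d : ℝ} {G : H → F}

theorem differentiableAt (hG : IsSmoothHomogeneous d G) {z : H} (hz : z ≠ 0) :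
    DifferentiableAt ℝ G z :=
  (hG.contDiffOn.differentiableOn (by simp)).differentiableAt
    (isOpen_compl_singleton.mem_nhds hz)

protected theorem fderiv (hG : IsSmoothHomogeneous d G) :
    IsSmoothHomogeneous (d - 1) (fderiv ℝ G) where
  contDiffOn := hG.contDiffOn.fderiv_of_isOpen isOpen_compl_singleton (by simp)
  apply_smul c hc z hz := by
    have heq : (fun w => G (c • w)) =ᶠ[𝓝 z] fun w => c ^ d • G w := by
      filter_upwards [isOpen_compl_singleton.mem_nhds hz] with w hw using hG.apply_smul hc hw
    have hscale : c • fderiv ℝ G (c • z) = c ^ d • fderiv ℝ G z := by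
      rw [← fderiv_comp_smul, heq.fderiv_eq, fderiv_fun_const_smul (hG.differentiableAt hz)]
    rw [Real.rpow_sub_one hc.ne', div_eq_inv_mul, mul_smul, ← hscale, inv_smul_smul₀ hc.ne']

theorem fderiv_apply (hG : IsSmoothHomogeneous d G) (v : H) :
    IsSmoothHomogeneous (d - 1) fun z => fderiv ℝ G z v where
  contDiffOn := hG.fderiv.contDiffOn.clm_apply contDiffOn_const
  apply_smul c hc z hz := by rw [hG.fderiv.apply_smul hc hz, smul_apply]

end Kernel

section Potential

variable {E : Type*} [NormedAddCommGroup E] [NormedSpace ℝ E] [FiniteDimensional ℝ E]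
  {H F : Type*} [NormedAddCommGroup H] [NormedSpace ℝ H]
  [NormedAddCommGroup F] [NormedSpace ℝ F] {ι : E →L[ℝ] H} {d : ℝ} {G : H → F}

/- By homogeneity `G (q - ι ξ) = c ^ d • G (c⁻¹ • q - ι (c⁻¹ • ξ))` with `c = 1 + ‖ξ‖`, and the
arguments on the right stay in a compact set avoiding the origin. -/
theorem exists_norm_sub_le (hG : IsSmoothHomogeneous d G) (hι : Function.Injective ι) {K : Set H}
    (hK : IsCompact K) (hKι : Disjoint K (range ι)) :
    ∃ C, ∀ q ∈ K, ∀ ξ, ‖G (q - ι ξ)‖ ≤ C * (1 + ‖ξ‖) ^ d := by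
  let S : Set (ℝ × E) := (Icc 0 1 ×ˢ Metric.closedBall 0 1) ∩ {s | s.1 + ‖s.2‖ = 1}
  have hS : IsCompact S := (isCompact_Icc.prod (isCompact_closedBall 0 1)).inter_right
    (isClosed_eq (by fun_prop) continuous_const)
  have hne : ∀ q ∈ K, ∀ s ∈ S, s.1 • q - ι s.2 ≠ 0 := by
    rintro q hq ⟨t, η⟩ ⟨-, hsum⟩ h
    rcases eq_or_ne t 0 with rfl | ht
    · have hη : η = 0 := hι (by simpa using h)
      simp [hη] at hsum
    · refine disjoint_left.1 hKι hq ⟨t⁻¹ • η, ?_⟩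
      rw [map_smul, ← sub_eq_zero.1 h, inv_smul_smul₀ ht]
  have hcont : ContinuousOn (fun w : H × ℝ × E => G (w.2.1 • w.1 - ι w.2.2)) (K ×ˢ S) :=
    hG.contDiffOn.continuousOn.comp (by fun_prop) fun w hw => hne _ hw.1 _ hw.2
  obtain ⟨C, hC⟩ := (hK.prod hS).exists_bound_of_continuousOn hcont
  refine ⟨C, fun q hq ξ => ?_⟩
  have hc : 0 < 1 + ‖ξ‖ := by positivity
  have hmem : ((1 + ‖ξ‖)⁻¹, (1 + ‖ξ‖)⁻¹ • ξ) ∈ S := by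
    have hsum : (1 + ‖ξ‖)⁻¹ + ‖(1 + ‖ξ‖)⁻¹ • ξ‖ = 1 := by
      rw [norm_smul, norm_inv, Real.norm_of_nonneg hc.le]
      field_simp
    have hinv : 0 ≤ (1 + ‖ξ‖)⁻¹ := by positivity
    refine ⟨⟨⟨hinv, ?_⟩, ?_⟩, hsum⟩
    · linarith [norm_nonneg ((1 + ‖ξ‖)⁻¹ • ξ)]
    · rw [mem_closedBall_zero_iff]
      linarith
  have hscale : G (q - ι ξ) =
      (1 + ‖ξ‖) ^ d • G ((1 + ‖ξ‖)⁻¹ • q - ι ((1 + ‖ξ‖)⁻¹ • ξ)) := by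
    rw [← hG.apply_smul hc (hne q hq _ hmem), map_smul, ← smul_sub, smul_inv_smul₀ hc.ne']
  rw [hscale, norm_smul, Real.norm_of_nonneg (by positivity), mul_comm]
  gcongr
  exact hC (q, _) ⟨hq, hmem⟩

variable [MeasurableSpace E] {ν : Measure E} {f : E → ℝ} {p : H}

theorem exists_integrable_bound (hG : IsSmoothHomogeneous d G) (hι : Function.Injective ι)
    (hf : Integrable (fun ξ => (1 + ‖ξ‖) ^ d * f ξ) ν) {K : Set H}
    (hK : IsCompact K) (hKι : Disjoint K (range ι)) :
    ∃ b : E → ℝ, Integrable b ν ∧ ∀ ξ, ∀ q ∈ K, ‖f ξ • G (q - ι ξ)‖ ≤ b ξ := by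
  obtain ⟨C, hC⟩ := hG.exists_norm_sub_le hι hK hKι
  refine ⟨fun ξ => C * ‖(1 + ‖ξ‖) ^ d * f ξ‖, hf.norm.const_mul C, fun ξ q hq => ?_⟩
  calc ‖f ξ • G (q - ι ξ)‖ = ‖f ξ‖ * ‖G (q - ι ξ)‖ := norm_smul _ _
    _ ≤ ‖f ξ‖ * (C * (1 + ‖ξ‖) ^ d) := by gcongr; exact hC q hq ξ
    _ = C * ‖(1 + ‖ξ‖) ^ d * f ξ‖ := by
      rw [norm_mul, Real.norm_of_nonneg (show 0 ≤ (1 + ‖ξ‖) ^ d by positivity)]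
      ring

variable [OpensMeasurableSpace E]

theorem aestronglyMeasurable_smul_sub (hG : IsSmoothHomogeneous d G)
    (hf : AEStronglyMeasurable f ν) (hp : p ∉ range ι) :
    AEStronglyMeasurable (fun ξ => f ξ • G (p - ι ξ)) ν :=
  hf.smul (hG.contDiffOn.continuousOn.comp_continuous (by fun_prop)
    (sub_apply_ne_zero_of_notMem_range hp)).aestronglyMeasurable

theorem integrable_smul_sub (hG : IsSmoothHomogeneous d G) (hι : Function.Injective ι)
    (hf : Integrable (fun ξ => (1 + ‖ξ‖) ^ d * f ξ) ν) (hp : p ∉ range ι) :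
    Integrable (fun ξ => f ξ • G (p - ι ξ)) ν := by
  obtain ⟨b, hb, hle⟩ :=
    hG.exists_integrable_bound hι hf isCompact_singleton (disjoint_singleton_left.2 hp)
  exact hb.mono' (hG.aestronglyMeasurable_smul_sub
    (aestronglyMeasurable_of_integrable_one_add_norm_rpow_mul hf) hp)
    (ae_of_all ν fun ξ => hle ξ p rfl)

variable [FiniteDimensional ℝ H]

theorem hasFDerivAt_potential (hG : IsSmoothHomogeneous d G) (hι : Function.Injective ι)
    (hf : Integrable (fun ξ => (1 + ‖ξ‖) ^ d * f ξ) ν) (hp : p ∉ range ι) :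
    HasFDerivAt (potential ν ι f G) (potential ν ι f (fderiv ℝ G) p) p := by
  have hfm := aestronglyMeasurable_of_integrable_one_add_norm_rpow_mul hf
  obtain ⟨K, hK, hpK, hKι⟩ := exists_compact_subset (isOpen_compl_range_of_finiteDimensional ι) hp
  have hKp : K ∈ 𝓝 p := mem_interior_iff_mem_nhds.1 hpK
  obtain ⟨b, hb, hle⟩ := hG.fderiv.exists_integrable_bound hι
    (integrable_one_add_norm_rpow_mul_of_le hf (sub_le_self d zero_le_one)) hK
    (disjoint_compl_left.mono_left hKι)
  refine hasFDerivAt_integral_of_dominated_of_fderiv_le (bound := b) hKp ?_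
    (hG.integrable_smul_sub hι hf hp) (hG.fderiv.aestronglyMeasurable_smul_sub hfm hp)
    (ae_of_all ν hle) hb (ae_of_all ν fun ξ q hq => ?_)
  · filter_upwards [hKp] with q hq using hG.aestronglyMeasurable_smul_sub hfm (hKι hq)
  · have hGq := hG.differentiableAt (sub_apply_ne_zero_of_notMem_range (hKι hq) ξ)
    exact ((hasFDerivAt_comp_sub (ι ξ)).2 hGq.hasFDerivAt).const_smul (f ξ)

theorem fderiv_potential (hG : IsSmoothHomogeneous d G) (hι : Function.Injective ι)
    (hf : Integrable (fun ξ => (1 + ‖ξ‖) ^ d * f ξ) ν) (hp : p ∉ range ι) :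
    fderiv ℝ (potential ν ι f G) p = potential ν ι f (fderiv ℝ G) p :=
  (hG.hasFDerivAt_potential hι hf hp).fderiv

theorem fderiv_potential_apply (hG : IsSmoothHomogeneous d G) (hι : Function.Injective ι)
    (hf : Integrable (fun ξ => (1 + ‖ξ‖) ^ d * f ξ) ν) (hp : p ∉ range ι) (v : H) :
    fderiv ℝ (potential ν ι f G) p v = potential ν ι f (fun z => fderiv ℝ G z v) p := by
  rw [hG.fderiv_potential hι hf hp]
  exact ContinuousLinearMap.integral_apply (hG.fderiv.integrable_smul_sub hι
    (integrable_one_add_norm_rpow_mul_of_le hf (sub_le_self d zero_le_one)) hp) v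

theorem contDiffOn_potential (hG : IsSmoothHomogeneous d G) (hι : Function.Injective ι)
    (hf : Integrable (fun ξ => (1 + ‖ξ‖) ^ d * f ξ) ν) :
    ContDiffOn ℝ ∞ (potential ν ι f G) (range ι)ᶜ := by
  refine contDiffOn_infty.2 fun k => ?_
  induction k generalizing d G with
  | zero =>
    exact contDiffOn_zero.2 fun p hp =>
      (hG.hasFDerivAt_potential hι hf hp).continuousAt.continuousWithinAt
  | succ k ih =>
    rw [Nat.cast_succ, contDiffOn_succ_iff_fderiv_of_isOpen
      (isOpen_compl_range_of_finiteDimensional ι), contDiffOn_clm_apply]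
    refine ⟨fun p hp =>
      (hG.hasFDerivAt_potential hι hf hp).differentiableAt.differentiableWithinAt, by simp,
      fun v => (ih (hG.fderiv_apply v) ?_).congr fun p hp => hG.fderiv_potential_apply hι hf hp v⟩
    exact integrable_one_add_norm_rpow_mul_of_le hf (sub_le_self d zero_le_one)

theorem fderiv_fderiv_potential (hG : IsSmoothHomogeneous d G) (hι : Function.Injective ι)
    (hf : Integrable (fun ξ => (1 + ‖ξ‖) ^ d * f ξ) ν) (hp : p ∉ range ι) :
    fderiv ℝ (fderiv ℝ (potential ν ι f G)) p =
      potential ν ι f (fderiv ℝ (fderiv ℝ G)) p := by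
  have heq : fderiv ℝ (potential ν ι f G) =ᶠ[𝓝 p] potential ν ι f (fderiv ℝ G) := by
    filter_upwards [(isOpen_compl_range_of_finiteDimensional ι).mem_nhds hp] with q hq
      using hG.fderiv_potential hι hf hq
  rw [heq.fderiv_eq]
  exact hG.fderiv.fderiv_potential hι
    (integrable_one_add_norm_rpow_mul_of_le hf (sub_le_self d zero_le_one)) hp

end Potential

theorem laplacian_potential {E H F : Type*} [NormedAddCommGroup E] [NormedSpace ℝ E]
    [FiniteDimensional ℝ E] [MeasurableSpace E] [OpensMeasurableSpace E] {ν : Measure E}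
    {f : E → ℝ} [NormedAddCommGroup H] [InnerProductSpace ℝ H] [FiniteDimensional ℝ H]
    [NormedAddCommGroup F] [NormedSpace ℝ F]
    {ι : E →L[ℝ] H} {d : ℝ} {G : H → F} (hG : IsSmoothHomogeneous d G)
    (hι : Function.Injective ι) (hf : Integrable (fun ξ => (1 + ‖ξ‖) ^ d * f ξ) ν)
    {p : H} (hp : p ∉ range ι) :
    Δ (potential ν ι f G) p = potential ν ι f (Δ G) p := by
  have hf₁ := integrable_one_add_norm_rpow_mul_of_le hf (sub_le_self d zero_le_one)
  have hf₂ := integrable_one_add_norm_rpow_mul_of_le hf₁ (sub_le_self (d - 1) zero_le_one)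
  have hint := hG.fderiv.fderiv.integrable_smul_sub hι hf₂ hp
  have happly (v : H) : fderiv ℝ (fderiv ℝ (potential ν ι f G)) p v v =
      ∫ ξ, f ξ • fderiv ℝ (fderiv ℝ G) (p - ι ξ) v v ∂ν := by
    rw [hG.fderiv_fderiv_potential hι hf hp, potential, ContinuousLinearMap.integral_apply hint,
      ContinuousLinearMap.integral_apply (hint.apply_continuousLinearMap v)]
    rfl
  simp only [potential, laplacian_eq_iteratedFDeriv_stdOrthonormalBasis, iteratedFDeriv_two_apply,
    Finset.smul_sum]
  rw [integral_finsetSum]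
  · exact Finset.sum_congr rfl fun i _ => happly _
  · exact fun i _ => (hint.apply_continuousLinearMap _).apply_continuousLinearMap _

end IsSmoothHomogeneous

theorem iteratedDeriv_two_comp_add_smul {E F : Type*} [NormedAddCommGroup E] [NormedSpace ℝ E]
    [NormedAddCommGroup F] [NormedSpace ℝ F] {g : E → F} {p : E} (hg : ContDiffAt ℝ 2 g p) (e : E) :
    iteratedDeriv 2 (fun t : ℝ => g (p + t • e)) 0 = iteratedFDeriv ℝ 2 g p ![e, e] := by
  have hp : p + (0 : ℝ) • e = p := by simp
  have hline : Filter.Tendsto (fun t : ℝ => p + t • e) (𝓝 0) (𝓝 p) :=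
    Continuous.tendsto' (by fun_prop) _ _ hp
  have hderiv : deriv (fun t : ℝ => g (p + t • e)) =ᶠ[𝓝 0] fun t => fderiv ℝ g (p + t • e) e := by
    filter_upwards [hline.eventually (hg.eventually (by simp))] with t ht
      using (ht.differentiableAt (by simp)).deriv_comp_add_smul
  have hfderiv : DifferentiableAt ℝ (fderiv ℝ g) (p + (0 : ℝ) • e) := by
    rw [hp]
    exact (hg.fderiv_right (m := 1) (by norm_num)).differentiableAt (by simp)
  have happly : DifferentiableAt ℝ (fun q => fderiv ℝ g q e) (p + (0 : ℝ) • e) :=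
    hfderiv.clm_apply (differentiableAt_const e)
  rw [iteratedDeriv_succ, iteratedDeriv_one, hderiv.deriv_eq, happly.deriv_comp_add_smul,
    fderiv_clm_apply hfderiv (differentiableAt_const e), iteratedFDeriv_two_apply]
  simp

section NormSqRpow

variable {H : Type*} [NormedAddCommGroup H] [InnerProductSpace ℝ H] {z : H}

theorem isSmoothHomogeneous_norm_sq_rpow (q : ℝ) :
    IsSmoothHomogeneous (2 * q) fun z : H => (‖z‖ ^ 2) ^ q where
  contDiffOn := (contDiff_norm_sq ℝ).contDiffOn.rpow_const_of_ne fun z hz => by simpa using hz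
  apply_smul c hc z _ := by
    rw [norm_smul, Real.norm_of_nonneg hc.le, mul_pow,
      Real.mul_rpow (by positivity) (by positivity), ← Real.rpow_natCast_mul hc.le,
      Nat.cast_two, smul_eq_mul]

theorem hasFDerivAt_norm_sq_rpow (q : ℝ) (hz : z ≠ 0) :
    HasFDerivAt (fun w : H => (‖w‖ ^ 2) ^ q) ((2 * q * (‖z‖ ^ 2) ^ (q - 1)) • innerSL ℝ z) z := by
  convert (hasStrictFDerivAt_norm_sq z).hasFDerivAt.rpow_const (p := q)
    (Or.inl (by simpa using hz)) using 1
  module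

theorem fderiv_fderiv_norm_sq_rpow_apply (q : ℝ) (hz : z ≠ 0) (v : H) :
    fderiv ℝ (fderiv ℝ fun w : H => (‖w‖ ^ 2) ^ q) z v v =
      2 * q * (‖z‖ ^ 2) ^ (q - 1) * ‖v‖ ^ 2 +
        4 * q * (q - 1) * (‖z‖ ^ 2) ^ (q - 2) * inner ℝ z v ^ 2 := by
  have hdiff := (isSmoothHomogeneous_norm_sq_rpow (H := H) q).fderiv.differentiableAt hz
  have happly : fderiv ℝ (fun w => fderiv ℝ (fun w : H => (‖w‖ ^ 2) ^ q) w v) z v =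
      fderiv ℝ (fderiv ℝ fun w : H => (‖w‖ ^ 2) ^ q) z v v := by
    simp [fderiv_clm_apply hdiff (differentiableAt_const v)]
  have heq : (fun w => fderiv ℝ (fun w : H => (‖w‖ ^ 2) ^ q) w v) =ᶠ[𝓝 z]
      fun w => 2 * q * (‖w‖ ^ 2) ^ (q - 1) * innerSL ℝ v w := by
    filter_upwards [isOpen_compl_singleton.mem_nhds hz] with w hw
    rw [(hasFDerivAt_norm_sq_rpow q hw).fderiv, smul_apply, innerSL_apply_apply,
      innerSL_apply_apply, real_inner_comm, smul_eq_mul]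
  rw [← happly, heq.fderiv_eq, (((hasFDerivAt_norm_sq_rpow (q - 1) hz).const_mul (2 * q)).fun_mul
    (innerSL ℝ v).hasFDerivAt).fderiv]
  simp only [add_apply, smul_apply, innerSL_apply_apply, smul_eq_mul, real_inner_self_eq_norm_sq,
    real_inner_comm z v, sub_sub, one_add_one_eq_two]
  ring

theorem laplacian_norm_sq_rpow [FiniteDimensional ℝ H] (q : ℝ) (hz : z ≠ 0) :
    Δ (fun w : H => (‖w‖ ^ 2) ^ q) z =
      2 * q * (2 * q + Module.finrank ℝ H - 2) * (‖z‖ ^ 2) ^ (q - 1) := by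
  have hpow : (‖z‖ ^ 2) ^ (q - 1) = (‖z‖ ^ 2) ^ (q - 2) * ‖z‖ ^ 2 := by
    rw [← Real.rpow_add_one (by simpa using hz)]
    ring_nf
  have hParseval : ∑ i, inner ℝ z (stdOrthonormalBasis ℝ H i) ^ 2 = ‖z‖ ^ 2 := by
    simpa using (stdOrthonormalBasis ℝ H).sum_sq_norm_inner_left z
  simp only [laplacian_eq_iteratedFDeriv_stdOrthonormalBasis, iteratedFDeriv_two_apply,
    Matrix.cons_val_zero, Matrix.cons_val_one, fderiv_fderiv_norm_sq_rpow_apply q hz,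
    OrthonormalBasis.norm_eq_one, Finset.sum_add_distrib, ← Finset.mul_sum, hParseval,
    Finset.sum_const, Finset.card_univ, Fintype.card_fin, nsmul_eq_mul]
  rw [hpow]
  ring

end NormSqRpow

section HalfSpace

open WithLp

/-- The inclusion `x ↦ (x, 0)` of the boundary hyperplane of a half space, as a map into the
`L²` product, whose Laplacian is the Euclidean one. -/
noncomputable def boundaryInclusion (E : Type*) [NormedAddCommGroup E] [NormedSpace ℝ E] :
    E →L[ℝ] WithLp 2 (E × ℝ) :=
  (prodContinuousLinearEquiv 2 ℝ E ℝ).symm ∘L ContinuousLinearMap.inl ℝ E ℝ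

/-- The potential with kernel `‖z‖ ^ (2q)` of the density `f ν` on the boundary hyperplane. -/
noncomputable def boundaryPotential {E : Type*} [NormedAddCommGroup E] [NormedSpace ℝ E]
    [MeasurableSpace E] (ν : Measure E) (f : E → ℝ) (q : ℝ) : WithLp 2 (E × ℝ) → ℝ :=
  potential ν (boundaryInclusion E) f fun z => (‖z‖ ^ 2) ^ q

theorem boundaryInclusion_apply {E : Type*} [NormedAddCommGroup E] [NormedSpace ℝ E] (ξ : E) :
    boundaryInclusion E ξ = toLp 2 (ξ, 0) := rfl

theorem boundaryInclusion_injective (E : Type*) [NormedAddCommGroup E] [NormedSpace ℝ E] :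
    Function.Injective (boundaryInclusion E) :=
  (prodContinuousLinearEquiv 2 ℝ E ℝ).symm.injective.comp (Prod.mk_left_injective 0)

theorem notMem_range_boundaryInclusion {E : Type*} [NormedAddCommGroup E] [NormedSpace ℝ E]
    {z : WithLp 2 (E × ℝ)} (hz : z.snd ≠ 0) : z ∉ range (boundaryInclusion E) := by
  rintro ⟨ξ, rfl⟩
  exact hz rfl

theorem hasDerivAt_toLp_prodMk {E : Type*} [NormedAddCommGroup E] [NormedSpace ℝ E] (x : E)
    (y : ℝ) : HasDerivAt (fun t : ℝ => toLp 2 (x, t)) (toLp 2 (0, 1)) y :=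
  (prodContinuousLinearEquiv 2 ℝ E ℝ).symm.hasFDerivAt.comp_hasDerivAt y
    ((hasDerivAt_const y x).prodMk (hasDerivAt_id y))

variable {E : Type*} [NormedAddCommGroup E] [InnerProductSpace ℝ E]

theorem norm_sq_toLp_sub_boundaryInclusion (x ξ : E) (y : ℝ) :
    ‖toLp 2 (x, y) - boundaryInclusion E ξ‖ ^ 2 = ‖x - ξ‖ ^ 2 + y ^ 2 := by
  simp [prod_norm_sq_eq_of_L2, boundaryInclusion_apply]

variable [FiniteDimensional ℝ E] [MeasurableSpace E] [OpensMeasurableSpace E] {ν : Measure E}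
  {f : E → ℝ} {q : ℝ}

theorem integrable_norm_sq_add_sq_rpow_mul
    (hf : Integrable (fun ξ => (1 + ‖ξ‖) ^ (2 * q) * f ξ) ν) (x : E) {y : ℝ} (hy : y ≠ 0) :
    Integrable (fun ξ => (‖x - ξ‖ ^ 2 + y ^ 2) ^ q * f ξ) ν := by
  have h := (isSmoothHomogeneous_norm_sq_rpow q).integrable_smul_sub
    (boundaryInclusion_injective E) hf (notMem_range_boundaryInclusion (z := toLp 2 (x, y)) hy)
  simpa only [norm_sq_toLp_sub_boundaryInclusion, smul_eq_mul, mul_comm] using h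

theorem contDiffOn_boundaryPotential (hf : Integrable (fun ξ => (1 + ‖ξ‖) ^ (2 * q) * f ξ) ν) :
    ContDiffOn ℝ ∞ (boundaryPotential ν f q) {z | z.snd ≠ 0} :=
  ((isSmoothHomogeneous_norm_sq_rpow q).contDiffOn_potential
    (boundaryInclusion_injective E) hf).mono fun _ => notMem_range_boundaryInclusion

theorem contDiffOn_rpow_mul_boundaryPotential (s : ℝ)
    (hf : Integrable (fun ξ => (1 + ‖ξ‖) ^ (2 * q) * f ξ) ν) :
    ContDiffOn ℝ ∞ (fun p : E × ℝ => p.2 ^ s * boundaryPotential ν f q (toLp 2 p))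
      {p | 0 < p.2} := by
  have hne : ∀ p ∈ {p : E × ℝ | 0 < p.2}, p.2 ≠ 0 := fun p hp => hp.ne'
  exact (contDiffOn_snd.rpow_const_of_ne hne).mul
    ((contDiffOn_boundaryPotential hf).comp contDiff_toLp.contDiffOn hne)

theorem laplacian_boundaryPotential (hf : Integrable (fun ξ => (1 + ‖ξ‖) ^ (2 * q) * f ξ) ν)
    {z : WithLp 2 (E × ℝ)} (hz : z.snd ≠ 0) :
    Δ (boundaryPotential ν f q) z =
      2 * q * (2 * q + Module.finrank ℝ E - 1) * boundaryPotential ν f (q - 1) z := by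
  have hp := notMem_range_boundaryInclusion hz
  have hfinrank : (Module.finrank ℝ (WithLp 2 (E × ℝ)) : ℝ) = Module.finrank ℝ E + 1 := by
    simp [(WithLp.linearEquiv 2 ℝ (E × ℝ)).finrank_eq]
  rw [boundaryPotential, (isSmoothHomogeneous_norm_sq_rpow q).laplacian_potential
    (boundaryInclusion_injective E) hf hp, boundaryPotential, potential, potential,
    ← integral_const_mul]
  refine integral_congr_ae (ae_of_all ν fun ξ => ?_)
  simp only [laplacian_norm_sq_rpow q (sub_apply_ne_zero_of_notMem_range hp ξ), hfinrank,
    smul_eq_mul]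
  ring

theorem hasDerivAt_boundaryPotential_toLp
    (hf : Integrable (fun ξ => (1 + ‖ξ‖) ^ (2 * q) * f ξ) ν) (x : E) {y : ℝ} (hy : y ≠ 0) :
    HasDerivAt (fun t => boundaryPotential ν f q (toLp 2 (x, t)))
      (2 * q * y * boundaryPotential ν f (q - 1) (toLp 2 (x, y))) y := by
  have hK := isSmoothHomogeneous_norm_sq_rpow (H := WithLp 2 (E × ℝ)) q
  have hp := notMem_range_boundaryInclusion (z := toLp 2 (x, y)) hy
  have hι := boundaryInclusion_injective E
  have hnormal (ξ : E) : inner ℝ (toLp 2 (x, y) - boundaryInclusion E ξ) (toLp 2 (0, 1)) = y := by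
    simp [prod_inner_apply, boundaryInclusion_apply]
  have h := (hK.hasFDerivAt_potential hι hf hp).comp_hasDerivAt y (hasDerivAt_toLp_prodMk x y)
  rw [← hK.fderiv_potential hι hf hp, hK.fderiv_potential_apply hι hf hp] at h
  refine h.congr_deriv ?_
  rw [boundaryPotential, potential, potential, ← integral_const_mul]
  refine integral_congr_ae (ae_of_all ν fun ξ => ?_)
  simp only [(hasFDerivAt_norm_sq_rpow q (sub_apply_ne_zero_of_notMem_range hp ξ)).fderiv,
    smul_apply, innerSL_apply_apply, hnormal, smul_eq_mul]
  ring

end HalfSpace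

section Hyperbolic

open WithLp

variable {n : ℕ} {x : EuclideanSpace ℝ (Fin n)} {y : ℝ}

theorem lapX_add_iteratedDeriv_two_eq_laplacian
    {U : WithLp 2 (EuclideanSpace ℝ (Fin n) × ℝ) → ℝ} (hU : ContDiffAt ℝ 2 U (toLp 2 (x, y))) :
    lapX (fun x y => U (toLp 2 (x, y))) x y + iteratedDeriv 2 (fun t => U (toLp 2 (x, t))) y =
      Δ U (toLp 2 (x, y)) := by
  have hnormal : iteratedDeriv 2 (fun t => U (toLp 2 (x, t))) y =
      iteratedFDeriv ℝ 2 U (toLp 2 (x, y)) ![toLp 2 (0, 1), toLp 2 (0, 1)] := by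
    rw [← iteratedDeriv_two_comp_add_smul hU]
    simpa [← toLp_smul, ← toLp_add] using
      (congrFun (iteratedDeriv_comp_const_add (n := 2) (f := fun t => U (toLp 2 (x, t))) y) 0).symm
  have htangential (i : Fin n) :
      iteratedDeriv 2 (fun t : ℝ => U (toLp 2 (x + t • EuclideanSpace.single i 1, y))) 0 =
        iteratedFDeriv ℝ 2 U (toLp 2 (x, y))
          ![toLp 2 (EuclideanSpace.single i 1, 0), toLp 2 (EuclideanSpace.single i 1, 0)] := by
    rw [← iteratedDeriv_two_comp_add_smul hU]
    simp [← toLp_smul, ← toLp_add]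
  rw [laplacian_eq_iteratedFDeriv_orthonormalBasis U
    ((EuclideanSpace.basisFun (Fin n) ℝ).prod (OrthonormalBasis.singleton Unit ℝ))]
  simp [lapX, hnormal, htangential]

theorem hypLap_rpow_mul {v : EuclideanSpace ℝ (Fin n) → ℝ → ℝ} (hv : ContDiffAt ℝ 2 (v x) y)
    (hy : 0 < y) (s : ℝ) :
    hypLap n (fun x y => y ^ s * v x y) x y =
      y ^ s * (y ^ 2 * (lapX v x y + iteratedDeriv 2 (v x) y) +
        (2 * s - n + 1) * y * deriv (v x) y + s * (s - n) * v x y) := by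
  have hlapX : lapX (fun x y => y ^ s * v x y) x y = y ^ s * lapX v x y := by
    simp only [lapX, iteratedDeriv_const_mul_field, Finset.mul_sum]
  have hpow : ContDiffAt ℝ 2 (fun t : ℝ => t ^ s) y := contDiffAt_rpow_const_of_ne hy.ne'
  have hderiv : deriv (fun t => t ^ s * v x t) y =
      s * y ^ (s - 1) * v x y + y ^ s * deriv (v x) y := by
    rw [deriv_fun_mul (hpow.differentiableAt (by simp)) (hv.differentiableAt (by simp)),
      Real.deriv_rpow_const]
  have hderiv₂ : iteratedDeriv 2 (fun t => t ^ s * v x t) y = s * (s - 1) * y ^ (s - 2) * v x y +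
      2 * (s * y ^ (s - 1)) * deriv (v x) y + y ^ s * iteratedDeriv 2 (v x) y := by
    have hpow₂ : iteratedDeriv 2 (fun t : ℝ => t ^ s) y = s * (s - 1) * y ^ (s - 2) := by
      simp [iteratedDeriv_eq_iterate, Real.iter_deriv_rpow_const, descPochhammer_succ_right]
    simp only [iteratedDeriv_fun_mul hpow hv, Finset.sum_range_succ, Finset.sum_range_zero,
      Nat.choose_zero_right, Nat.choose_one_right, Nat.choose_self, Nat.sub_zero, Nat.sub_self,
      Nat.add_one_sub_one, iteratedDeriv_zero, iteratedDeriv_one, hpow₂, Real.deriv_rpow_const]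
    push_cast
    ring
  rw [hypLap, hlapX, hderiv, hderiv₂, Real.rpow_sub_one hy.ne',
    show y ^ (s - 2) = y ^ s / y ^ 2 by exact_mod_cast Real.rpow_sub_natCast hy.ne' s 2]
  field_simp
  ring

variable {f : EuclideanSpace ℝ (Fin n) → ℝ}

theorem poissonExt_eq_rpow_mul_boundaryPotential (γ : ℝ) (x : EuclideanSpace ℝ (Fin n)) (y : ℝ) :
    poissonExt n γ f x y =
      y ^ ((n : ℝ) / 2 + γ) *
        boundaryPotential volume f (-((n : ℝ) / 2 + γ)) (toLp 2 (x, y)) := by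
  rw [boundaryPotential, potential, ← integral_const_mul]
  refine integral_congr_ae (ae_of_all volume fun ξ => ?_)
  simp only [norm_sq_toLp_sub_boundaryInclusion, smul_eq_mul]
  ring

theorem hypLap_rpow_mul_boundaryPotential {s : ℝ}
    (hf : Integrable fun ξ => (1 + ‖ξ‖) ^ (2 * -s) * f ξ) (x : EuclideanSpace ℝ (Fin n))
    (hy : 0 < y) :
    hypLap n (fun x y => y ^ s * boundaryPotential volume f (-s) (toLp 2 (x, y))) x y =
      s * (s - n) * (y ^ s * boundaryPotential volume f (-s) (toLp 2 (x, y))) := by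
  have hz : (toLp 2 (x, y)).snd ≠ 0 := hy.ne'
  have hU : ContDiffAt ℝ 2 (boundaryPotential volume f (-s)) (toLp 2 (x, y)) :=
    ((contDiffOn_boundaryPotential hf).contDiffAt
      ((isOpen_ne_fun (by fun_prop) continuous_const).mem_nhds hz)).of_le ENat.LEInfty.out
  have hv : ContDiffAt ℝ 2 (fun t => boundaryPotential volume f (-s) (toLp 2 (x, t))) y :=
    hU.comp y (contDiff_toLp.comp (contDiff_prodMk_right x)).contDiffAt
  rw [hypLap_rpow_mul hv hy, lapX_add_iteratedDeriv_two_eq_laplacian hU,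
    (hasDerivAt_boundaryPotential_toLp hf x hy.ne').deriv, laplacian_boundaryPotential hf hz,
    finrank_euclideanSpace_fin]
  ring

theorem poisson_extension_eigenfunction_general (n : ℕ) (γ μ : ℝ) (hμ : μ = (n : ℝ) ^ 2 / 4 - γ ^ 2)
    (f : EuclideanSpace ℝ (Fin n) → ℝ)
    (hf : Integrable fun ξ => (1 + ‖ξ‖) ^ (-((n : ℝ) + 2 * γ)) * f ξ) :
    (∀ x : EuclideanSpace ℝ (Fin n), ∀ y : ℝ, 0 < y →
      Integrable (fun ξ : EuclideanSpace ℝ (Fin n) =>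
        y ^ ((n : ℝ) / 2 + γ) * (‖x - ξ‖ ^ 2 + y ^ 2) ^ (-((n : ℝ) / 2 + γ)) * f ξ)) ∧
    ContDiffOn ℝ ∞ (fun p : EuclideanSpace ℝ (Fin n) × ℝ => poissonExt n γ f p.1 p.2)
      {p : EuclideanSpace ℝ (Fin n) × ℝ | 0 < p.2} ∧
    ∀ x : EuclideanSpace ℝ (Fin n), ∀ y : ℝ, 0 < y →
      hypLap n (poissonExt n γ f) x y + μ * poissonExt n γ f x y = 0 := by
  rw [show -((n : ℝ) + 2 * γ) = 2 * -((n : ℝ) / 2 + γ) by ring] at hf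
  have hu : poissonExt n γ f = fun x y => y ^ ((n : ℝ) / 2 + γ) *
      boundaryPotential volume f (-((n : ℝ) / 2 + γ)) (toLp 2 (x, y)) :=
    funext₂ (poissonExt_eq_rpow_mul_boundaryPotential γ)
  refine ⟨fun x y hy => ?_, ?_, fun x y hy => ?_⟩
  · simpa only [mul_assoc] using (integrable_norm_sq_add_sq_rpow_mul hf x hy.ne').const_mul _
  · simpa only [hu] using contDiffOn_rpow_mul_boundaryPotential _ hf
  · rw [hu, hypLap_rpow_mul_boundaryPotential hf x hy, hμ]
    ring

end Hyperbolic

/-- for bounded continuous `f` the Poisson convolution is well defined,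
smooth on the upper half-space, and satisfies `Δ_{g⁺} u + μ u = 0`, `μ = n²/4 - γ²`. -/
theorem poisson_extension_eigenfunction
    (n : ℕ) (hn : 1 ≤ n) (γ : ℝ) (hγ : γ ∈ Set.Ioo (0:ℝ) ((n : ℝ)/2))
    (μ : ℝ) (hμ : μ = (n : ℝ)^2/4 - γ^2)
    (f : EuclideanSpace ℝ (Fin n) → ℝ) (hfc : Continuous f)
    (hfb : ∃ C : ℝ, ∀ x, |f x| ≤ C) :
    (∀ x : EuclideanSpace ℝ (Fin n), ∀ y : ℝ, 0 < y →
      Integrable (fun ξ : EuclideanSpace ℝ (Fin n) =>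
        y ^ ((n : ℝ)/2 + γ) * (‖x - ξ‖ ^ 2 + y ^ 2) ^ (-((n : ℝ)/2 + γ)) * f ξ)) ∧
    ContDiffOn ℝ (⊤ : ℕ∞) (fun p : EuclideanSpace ℝ (Fin n) × ℝ => poissonExt n γ f p.1 p.2)
      {p : EuclideanSpace ℝ (Fin n) × ℝ | 0 < p.2} ∧
    ∀ x : EuclideanSpace ℝ (Fin n), ∀ y : ℝ, 0 < y →
      hypLap n (poissonExt n γ f) x y + μ * poissonExt n γ f x y = 0 := by
  obtain ⟨C, hC⟩ := hfb
  exact poisson_extension_eigenfunction_general n γ μ hμ f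
    (integrable_one_add_norm_rpow_mul_of_bounded hfc.aestronglyMeasurable hC
      (by rw [finrank_euclideanSpace_fin]; linarith [hγ.1]))
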